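/- Suppose w satisfies (A1). Then there exist σ ∈ (0,1] and a nonnegative function ρ : [0,∞) → [0,∞) that is monotone on (0,1), vanishes on [1,∞), is strictly positive on (0,σ), and satisfies 0 < ∫_ℝ ρ(|z|) z² dz < ∞, such that for every δ ∈ (0,1/2) and all x, y ∈ Ω one has δ⁻³ ρ(|x−y|/δ) ≤ w̃ˢ_δ(x,y), where w̃ˢ_δ(x,y) = (w̃_δ(x,y) + w̃_δ(y,x))/2 denotes the symmetric part of w̃_δ. -/

import Mathlib

/-!
In the scaled variables `t = dist(x, ∂Ω) / δ` and `r = |x - y| / δ`, both `w_δ` and `b_δ` are `δ⁻³`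
times a profile: `w r`, respectively `B t = 2 / (1 + t)² ∫_t^1 u w(u) du` (`bProfile`, `bk_eq`), with
`t` truncated at `1`. Whenever `0 < r < 1`, one of the two points has scaled boundary distance `s`
with `r ≤ s` or `1/2 ≤ s` (`exists_far_point`). Since `w̃_δ` at that point alone is at least
`δ⁻³ (w r - B s)`, it is enough to find `ρ` with `2 ρ r ≤ w r - B s` for all such `s`
(`conclusion_of_bound`).

* If `w` is not constant on `(0,1)`, pick `p < a` in `(0,1)` with `w a < w p`. For `r ≤ p`,
  splitting `∫_r^1 2 u w(u) du` at `a` gives `B s ≤ a² w r + (1 - a²) w a`, so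
  `w r - B s ≥ (1 - a²) (w p - w a) > 0`, and `ρ` is a constant on a short interval `(0,σ)`.
* If `w = k` on `(0,1)`, then `B s ≤ k (1 - s) / (1 + s) ≤ k (1 - s)`, so `w r - B s ≥ k s ≥ k r / 2`, and
  `ρ r = k r / 4` on `(0,1)`. No `ρ` bounded below near `0` can work here, which is why `ρ` is
  increasing in this case and decreasing in the other.
-/

open MeasureTheory Set

noncomputable section

namespace NonlocalDirichlet

/-- Assumption (A1) on the kernel `w`: continuous, nonincreasing and strictly
positive on `(0,1)`, vanishing outside `(0,1)`, with second moment `2`. -/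
def A1 (w : ℝ → ℝ) : Prop :=
  ContinuousOn w (Ioo 0 1) ∧ AntitoneOn w (Ioo 0 1) ∧
  (∀ r ∈ Ioo (0:ℝ) 1, 0 < w r) ∧ (∀ r, r ∉ Ioo (0:ℝ) 1 → w r = 0) ∧
  Integrable (fun z : ℝ => w |z| * z ^ 2) ∧ (∫ z : ℝ, w |z| * z ^ 2) = 2

/-- The rescaled kernel `w_δ(x,y) = δ⁻³ w(|x-y|/δ)`. -/
def wk (w : ℝ → ℝ) (δ x y : ℝ) : ℝ := δ⁻¹ ^ 3 * w (|x - y| / δ)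

/-- `a_δ(x) = ∫₀¹ w_δ(x,y) dy`. -/
def ak (w : ℝ → ℝ) (δ x : ℝ) : ℝ := ∫ y in Ioo (0:ℝ) 1, wk w δ x y

/-- `b_δ(x)`. -/
def bk (w : ℝ → ℝ) (δ x : ℝ) : ℝ :=
  if x ∈ Ioo 0 δ then
    (2 / (x + δ) ^ 2) * ∫ y in (x - δ)..(0:ℝ), (x - y) * wk w δ x y
  else if x ∈ Ioo (1 - δ) 1 then
    (2 / (1 - x + δ) ^ 2) * ∫ y in (1:ℝ)..(x + δ), (y - x) * wk w δ x y
  else 0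

/-- The signed kernel `w_δ(x,y) − b_δ(x)·χ(|y−x| ≤ δ)` of `Ñ_δ`. -/
def nk (w : ℝ → ℝ) (δ x y : ℝ) : ℝ :=
  wk w δ x y - bk w δ x * (if |y - x| ≤ δ then 1 else 0)

/-- `w̃_δ(x,y) = |w_δ(x,y) − b_δ(x)·χ(|y−x| ≤ δ)|`. -/
def wtk (w : ℝ → ℝ) (δ x y : ℝ) : ℝ := |nk w δ x y|

/-- The comparison operator `P̃_δ`. -/
def Ptilde (w : ℝ → ℝ) (δ : ℝ) (u : ℝ → ℝ) (x : ℝ) : ℝ :=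
  ak w δ x * u x - ∫ y in Ioo (0:ℝ) 1, u y * wtk w δ x y

/-- The nonlocal operator `Ñ_δ`. -/
def Ntilde (w : ℝ → ℝ) (δ : ℝ) (u : ℝ → ℝ) (x : ℝ) : ℝ :=
  ak w δ x * u x - ∫ y in Ioo (0:ℝ) 1, u y * nk w δ x y

/-- Assumption (A2): `a_δ(x) ≥ ∫₀¹ w̃_δ(x,y) dy` on `Ω`. -/
def A2 (w : ℝ → ℝ) (δ : ℝ) : Prop :=
  ∀ x ∈ Ioo (0:ℝ) 1, (∫ y in Ioo (0:ℝ) 1, wtk w δ x y) ≤ ak w δ x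

/-- Assumption (A2s). -/
def A2s (w : ℝ → ℝ) (δ : ℝ) : Prop :=
  ∀ x ∈ Ioo (0:ℝ) 1,
    volume {y ∈ Ioo (0:ℝ) 1 | nk w δ x y ≤ 0} ≤ volume {y ∈ Ioo (0:ℝ) 1 | 0 ≤ nk w δ x y}

/-- Assumption (A3): `a_δ(x) ≥ ∫₀¹ w̃_δ(y,x) dy` on `Ω`. -/
def A3 (w : ℝ → ℝ) (δ : ℝ) : Prop :=
  ∀ x ∈ Ioo (0:ℝ) 1, (∫ y in Ioo (0:ℝ) 1, wtk w δ y x) ≤ ak w δ x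

/-- Lebesgue measure restricted to `Ω = (0,1)`. -/
def μΩ : Measure ℝ := volume.restrict (Ioo 0 1)


/-- The scaled profile of `b_δ`: near the boundary, `b_δ(x) = δ⁻³ B(dist(x, ∂Ω) / δ)`. -/
def bProfile (w : ℝ → ℝ) (s : ℝ) : ℝ :=
  2 / (1 + s) ^ 2 * ∫ u in s..1, u * w u

/-- The distance from `x` to `∂Ω = {0, 1}` in units of `δ`, truncated at `1` (where `bProfile`
vanishes). -/
def sdist (δ x : ℝ) : ℝ := min 1 (min x (1 - x) / δ)

lemma bk_eq (w : ℝ → ℝ) {δ x : ℝ} (hδ : δ ∈ Ioo (0:ℝ) (1/2)) (hx : x ∈ Ioo (0:ℝ) 1) :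
    bk w δ x = δ⁻¹ ^ 3 * bProfile w (sdist δ x) := by
  obtain ⟨h0, h2⟩ := hδ
  obtain ⟨hx0, hx1⟩ := hx
  have hne : δ ≠ 0 := h0.ne'
  by_cases hl : x < δ
  · have hs : sdist δ x = x / δ := by
      rw [sdist, min_eq_left (by linarith : x ≤ 1 - x), min_eq_right]
      exact (div_le_one h0).2 hl.le
    have hI : (∫ y in (x - δ)..(0:ℝ), (x - y) * wk w δ x y)
        = ∫ y in (x - δ)..(0:ℝ), (fun u => δ⁻¹ ^ 2 * (u * w u)) (x / δ - y / δ) := by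
      apply intervalIntegral.integral_congr
      intro y hy
      rw [uIcc_of_le (by linarith)] at hy
      have : |x - y| = x - y := abs_of_nonneg (by linarith [hy.2])
      simp only [wk, this, ← sub_div]
      field_simp
    rw [bk, if_pos ⟨hx0, hl⟩, hI, intervalIntegral.integral_comp_sub_div (fun u => δ⁻¹ ^ 2 * (u * w u)) hne,
     
      intervalIntegral.integral_const_mul, hs, bProfile]
    have e1 : x / δ - 0 / δ = x / δ := by simp
    have e2 : x / δ - (x - δ) / δ = 1 := by field_simp; ring
    have e3 : 1 + x / δ = (x + δ) / δ := by field_simp; ring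
    rw [e1, e2, e3, smul_eq_mul]
    have : x + δ ≠ 0 := by linarith
    field_simp
  by_cases hr : 1 - δ < x
  · have hs : sdist δ x = (1 - x) / δ := by
      rw [sdist, min_eq_right (by linarith : 1 - x ≤ x), min_eq_right]
      exact (div_le_one h0).2 (by linarith)
    have hI : (∫ y in (1:ℝ)..(x + δ), (y - x) * wk w δ x y)
        = ∫ y in (1:ℝ)..(x + δ), (fun u => δ⁻¹ ^ 2 * (u * w u)) (y / δ - x / δ) := by
      apply intervalIntegral.integral_congr
      intro y hy
      rw [uIcc_of_le (by linarith)] at hy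
      have : |x - y| = y - x := by rw [abs_sub_comm]; exact abs_of_nonneg (by linarith [hy.1])
      simp only [wk, this, ← sub_div]
      field_simp
    rw [bk, if_neg (fun h => hl h.2), if_pos ⟨hr, hx1⟩, hI,
      intervalIntegral.integral_comp_div_sub (fun u => δ⁻¹ ^ 2 * (u * w u)) hne,
      intervalIntegral.integral_const_mul, hs, bProfile]
    have e1 : 1 / δ - x / δ = (1 - x) / δ := by ring
    have e2 : (x + δ) / δ - x / δ = 1 := by field_simp; ring
    have e3 : 1 + (1 - x) / δ = (1 - x + δ) / δ := by field_simp; ring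
    rw [e1, e2, e3, smul_eq_mul]
    have : 1 - x + δ ≠ 0 := by linarith
    field_simp
  · have hs : sdist δ x = 1 := by
      rw [sdist, min_eq_left]
      rw [le_div_iff₀ h0, one_mul]
      exact le_min (not_lt.1 hl) (by linarith)
    rw [bk, if_neg (fun h => hl h.2), if_neg (fun h => hr h.1), hs, bProfile]
    simp

lemma sdist_mem {δ x : ℝ} (hδ : 0 < δ) (hx : x ∈ Ioo (0:ℝ) 1) : sdist δ x ∈ Ioc (0:ℝ) 1 :=
  ⟨lt_min one_pos (div_pos (lt_min hx.1 (by linarith [hx.2])) hδ), min_le_left _ _⟩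

/-- Two points at distance less than `δ` cannot both be much closer to `∂Ω` than to each other:
if both lie within `δ / 2` of `∂Ω`, they lie near the same endpoint. -/
lemma exists_far_point {δ x y : ℝ} (hδ : δ ∈ Ioo (0:ℝ) (1/2)) (hx : x ∈ Ioo (0:ℝ) 1)
    (hy : y ∈ Ioo (0:ℝ) 1) (hxy : |x - y| < δ) :
    (|x - y| / δ ≤ sdist δ x ∨ 1 / 2 ≤ sdist δ x) ∨
      (|x - y| / δ ≤ sdist δ y ∨ 1 / 2 ≤ sdist δ y) := by
  obtain ⟨h0, h2⟩ := hδ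
  obtain ⟨hx0, hx1⟩ := hx
  obtain ⟨hy0, hy1⟩ := hy
  have key : ∀ z c : ℝ, c ≤ δ → c ≤ z → c ≤ 1 - z → c / δ ≤ sdist δ z := by
    intro z c h1 h3 h4
    exact le_min ((div_le_one h0).2 h1) (by gcongr; exact le_min h3 h4)
  have half : ∀ z : ℝ, δ / 2 ≤ z → δ / 2 ≤ 1 - z → 1 / 2 ≤ sdist δ z := by
    intro z h3 h4
    have := key z (δ / 2) (by linarith) h3 h4
    have e : δ / 2 / δ = 1 / 2 := by field_simp
    rwa [e] at this
  obtain ⟨ha, hb⟩ := abs_lt.1 hxy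
  by_contra! hcon
  obtain ⟨⟨c1, c2⟩, c3, c4⟩ := hcon
  have hxx : x < δ / 2 ∨ 1 - x < δ / 2 := by
    by_contra! h; linarith [half x h.1 h.2]
  have hyy : y < δ / 2 ∨ 1 - y < δ / 2 := by
    by_contra! h; linarith [half y h.1 h.2]
  rcases le_total x y with hle | hle
  · have e : |x - y| = y - x := by rw [abs_sub_comm]; exact abs_of_nonneg (by linarith)
    rw [e] at c1 c3
    rcases hxx with h | h <;> rcases hyy with h' | h'
    · linarith [key y (y - x) (by linarith) (by linarith) (by linarith)]
    · linarith
    · linarith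
    · linarith [key x (y - x) (by linarith) (by linarith) (by linarith)]
  · have e : |x - y| = x - y := abs_of_nonneg (by linarith)
    rw [e] at c1 c3
    rcases hxx with h | h <;> rcases hyy with h' | h'
    · linarith [key x (x - y) (by linarith) (by linarith) (by linarith)]
    · linarith
    · linarith
    · linarith [key y (x - y) (by linarith) (by linarith) (by linarith)]

lemma wtk_nonneg (w : ℝ → ℝ) (δ x y : ℝ) : 0 ≤ wtk w δ x y := abs_nonneg _

lemma le_wtk (w : ℝ → ℝ) {δ x y : ℝ} (hδ : δ ∈ Ioo (0:ℝ) (1/2)) (hx : x ∈ Ioo (0:ℝ) 1)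
    (hxy : |x - y| < δ) :
    δ⁻¹ ^ 3 * (w (|x - y| / δ) - bProfile w (sdist δ x)) ≤ wtk w δ x y := by
  refine le_trans (le_of_eq ?_) (le_abs_self _)
  rw [nk, if_pos (by rw [abs_sub_comm]; exact hxy.le), bk_eq w hδ hx, wk]
  ring

/-- A nonnegative bounded radial density supported in the unit ball and positive near the origin
has a finite, nonzero second moment. -/
lemma moment_of_bounded {ρ : ℝ → ℝ} {σ M : ℝ} (hσ : 0 < σ) (hm : Measurable ρ)
    (h0 : ∀ r, 0 ≤ ρ r) (hM : ∀ r, ρ r ≤ M) (h1 : ∀ r, 1 ≤ r → ρ r = 0)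
    (hpos : ∀ r ∈ Ioo (0:ℝ) σ, 0 < ρ r) :
    Integrable (fun z : ℝ => ρ |z| * z ^ 2) ∧ 0 < ∫ z : ℝ, ρ |z| * z ^ 2 := by
  have hmeas : Measurable (fun z : ℝ => ρ |z| * z ^ 2) :=
    (hm.comp measurable_norm).mul (measurable_id.pow_const 2)
  have hint : Integrable (fun z : ℝ => ρ |z| * z ^ 2) := by
    have hon : IntegrableOn (fun z : ℝ => ρ |z| * z ^ 2) (Icc (-1) 1) := by
      refine Measure.integrableOn_of_bounded (M := M) (by simp) hmeas.aestronglyMeasurable ?_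
      filter_upwards [ae_restrict_mem measurableSet_Icc] with z hz
      rw [Real.norm_of_nonneg (mul_nonneg (h0 _) (sq_nonneg z))]
      have hz2 : z ^ 2 ≤ 1 := by nlinarith [hz.1, hz.2]
      nlinarith [h0 |z|, hM |z|]
    refine hon.integrable_of_forall_notMem_eq_zero fun z hz => ?_
    have : 1 ≤ |z| := by
      by_contra! h
      exact hz ⟨(abs_lt.1 h).1.le, (abs_lt.1 h).2.le⟩
    rw [h1 _ this, zero_mul]
  refine ⟨hint, ?_⟩
  rw [integral_pos_iff_support_of_nonneg (fun z => mul_nonneg (h0 _) (sq_nonneg z)) hint]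
  refine lt_of_lt_of_le ?_ (measure_mono (s := Ioo 0 σ) fun z hz => ?_)
  · simpa using hσ
  · have hz' : 0 < ρ |z| := by rw [abs_of_pos hz.1]; exact hpos z hz
    exact (mul_pos hz' (pow_pos hz.1 2)).ne'

/-- Reduction of the claim to a one-variable inequality between profiles. -/
lemma conclusion_of_bound {w ρ : ℝ → ℝ} {σ M : ℝ} (hσ : σ ∈ Ioc (0:ℝ) 1) (hm : Measurable ρ)
    (hM : ∀ r, ρ r ≤ M) (hmono : MonotoneOn ρ (Ioo 0 1) ∨ AntitoneOn ρ (Ioo 0 1))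
    (hzero : ∀ r, r ∉ Ioo 0 σ → ρ r = 0) (hpos : ∀ r ∈ Ioo (0:ℝ) σ, 0 < ρ r)
    (hbd : ∀ r ∈ Ioo (0:ℝ) σ, ∀ s ∈ Ioc (0:ℝ) 1, (r ≤ s ∨ 1 / 2 ≤ s) →
      2 * ρ r ≤ w r - bProfile w s) :
    ∃ σ ∈ Ioc (0:ℝ) 1, ∃ ρ : ℝ → ℝ,
      (∀ r, 0 ≤ ρ r) ∧
      (MonotoneOn ρ (Ioo 0 1) ∨ AntitoneOn ρ (Ioo 0 1)) ∧
      (∀ r : ℝ, 1 ≤ r → ρ r = 0) ∧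
      (∀ r ∈ Ioo (0:ℝ) σ, 0 < ρ r) ∧
      Integrable (fun z : ℝ => ρ |z| * z ^ 2) ∧
      (0 < ∫ z : ℝ, ρ |z| * z ^ 2) ∧
      (∀ δ ∈ Ioo (0:ℝ) (1/2), ∀ x ∈ Ioo (0:ℝ) 1, ∀ y ∈ Ioo (0:ℝ) 1,
        δ⁻¹ ^ 3 * ρ (|x - y| / δ) ≤ (wtk w δ x y + wtk w δ y x) / 2) := by
  have h0 : ∀ r, 0 ≤ ρ r := fun r => by
    by_cases hr : r ∈ Ioo 0 σ
    · exact (hpos r hr).le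
    · exact (hzero r hr).ge
  have h1 : ∀ r : ℝ, 1 ≤ r → ρ r = 0 := fun r hr =>
    hzero r fun h => by linarith [h.2, hσ.2]
  obtain ⟨hi, hp⟩ := moment_of_bounded hσ.1 hm h0 hM h1 hpos
  refine ⟨σ, hσ, ρ, h0, hmono, h1, hpos, hi, hp, fun δ hδ x hx y hy => ?_⟩
  have nx := wtk_nonneg w δ x y
  have ny := wtk_nonneg w δ y x
  by_cases hr : |x - y| / δ ∈ Ioo 0 σ
  · have hxy : |x - y| < δ := (div_lt_one hδ.1).1 (hr.2.trans_le hσ.2)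
    have hyx : |y - x| < δ := by rwa [abs_sub_comm]
    have hc : 0 ≤ δ⁻¹ ^ 3 := pow_nonneg (inv_nonneg.2 hδ.1.le) 3
    rcases exists_far_point hδ hx hy hxy with h | h
    · have := mul_le_mul_of_nonneg_left (hbd _ hr _ (sdist_mem hδ.1 hx) h) hc
      linarith [le_wtk w hδ hx hxy]
    · have := mul_le_mul_of_nonneg_left (hbd _ hr _ (sdist_mem hδ.1 hy) h) hc
      have h' := le_wtk w hδ hy hyx
      rw [abs_sub_comm y x] at h'
      linarith
  · rw [hzero _ hr, mul_zero]
    linarith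

lemma A1.nonneg {w : ℝ → ℝ} (hw : A1 w) (r : ℝ) : 0 ≤ w r := by
  by_cases hr : r ∈ Ioo (0:ℝ) 1
  · exact (hw.2.2.1 r hr).le
  · exact (hw.2.2.2.1 r hr).ge

lemma A1.anti {w : ℝ → ℝ} (hw : A1 w) {r s : ℝ} (hr : 0 < r) (hrs : r ≤ s) : w s ≤ w r := by
  by_cases hs : s < 1
  · exact hw.2.1 ⟨hr, hrs.trans_lt hs⟩ ⟨hr.trans_le hrs, hs⟩ hrs
  · rw [hw.2.2.2.1 s fun h => hs h.2]
    exact hw.nonneg r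

lemma A1.intervalIntegrable {w : ℝ → ℝ} (hw : A1 w) {p q : ℝ} (hp : 0 < p) (hpq : p ≤ q) :
    IntervalIntegrable (fun u => u * w u) volume p q := by
  have h : AntitoneOn w (uIcc p q) := by
    rw [uIcc_of_le hpq]
    exact fun a ha b _ hab => hw.anti (hp.trans_le ha.1) hab
  exact h.intervalIntegrable.continuousOn_mul continuousOn_id

lemma A1.integral_le {w : ℝ → ℝ} (hw : A1 w) {p q C : ℝ} (hp : 0 < p) (hpq : p ≤ q)
    (hC : w p ≤ C) : ∫ u in p..q, u * w u ≤ C * (q ^ 2 - p ^ 2) / 2 := by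
  have h : ∫ u in p..q, u * w u ≤ ∫ u in p..q, u * C := by
    refine intervalIntegral.integral_mono_on hpq (hw.intervalIntegrable hp hpq)
      (Continuous.intervalIntegrable (by fun_prop) _ _) fun u hu => ?_
    exact mul_le_mul_of_nonneg_left ((hw.anti hp hu.1).trans hC) (hp.le.trans hu.1)
  rw [intervalIntegral.integral_mul_const, integral_id] at h
  linarith

/-- Splitting the integral in `bProfile` at `a` and using that `w` is nonincreasing. -/
lemma A1.bProfile_le {w : ℝ → ℝ} (hw : A1 w) {r s a : ℝ} (hr : 0 < r) (hrs : r ≤ s) (hs : s ≤ 1)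
    (hra : r ≤ a) (ha : a ≤ 1) :
    bProfile w s ≤ a ^ 2 * w r + (1 - a ^ 2) * w a := by
  have hmono : ∫ u in s..1, u * w u ≤ ∫ u in r..1, u * w u := by
    refine intervalIntegral.integral_mono_interval hrs hs le_rfl ?_
      (hw.intervalIntegrable hr (hrs.trans hs))
    filter_upwards [ae_restrict_mem measurableSet_Ioc] with u hu
    exact mul_nonneg (hr.trans hu.1).le (hw.nonneg u)
  have ha0 := hr.trans_le hra
  rw [← intervalIntegral.integral_add_adjacent_intervals (hw.intervalIntegrable hr hra)
    (hw.intervalIntegrable ha0 ha)] at hmono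
  have i1 := hw.integral_le hr hra le_rfl
  have i2 := hw.integral_le ha0 ha le_rfl
  have hnn : 0 ≤ ∫ u in s..1, u * w u :=
    intervalIntegral.integral_nonneg hs fun u hu =>
      mul_nonneg ((hr.trans_le hrs).le.trans hu.1) (hw.nonneg u)
  have hcoef : 2 / (1 + s) ^ 2 ≤ 2 :=
    div_le_self zero_le_two (one_le_pow₀ (by linarith))
  have hB : bProfile w s ≤ 2 * ∫ u in s..1, u * w u :=
    mul_le_mul_of_nonneg_right hcoef hnn
  nlinarith [mul_nonneg (sq_nonneg r) (hw.nonneg r)]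

lemma A1.bProfile_le_of_const {w : ℝ → ℝ} (hw : A1 w) {s k : ℝ} (hs0 : 0 < s) (hs : s ≤ 1)
    (hk : w s ≤ k) (hk0 : 0 ≤ k) : bProfile w s ≤ k * (1 - s) := by
  have h := hw.integral_le hs0 hs hk
  have hpos : 0 < (1 + s) ^ 2 := by positivity
  rw [bProfile, div_mul_eq_mul_div, div_le_iff₀ hpos]
  -- `(1 - s) (1 + s) ≤ (1 - s) (1 + s)²`
  nlinarith [mul_nonneg (mul_nonneg hk0 (sub_nonneg.2 hs))
    (mul_nonneg hs0.le (by linarith : 0 ≤ 1 + s))]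

/-- existence of a radial monotone lower bound `ρ` for the symmetric
part `w̃ˢ_δ(x,y) = (w̃_δ(x,y)+w̃_δ(y,x))/2`, with nonzero finite second moment. -/
theorem statement5 (w : ℝ → ℝ) (hw : A1 w) :
    ∃ σ ∈ Ioc (0:ℝ) 1, ∃ ρ : ℝ → ℝ,
      (∀ r, 0 ≤ ρ r) ∧
      (MonotoneOn ρ (Ioo 0 1) ∨ AntitoneOn ρ (Ioo 0 1)) ∧
      (∀ r : ℝ, 1 ≤ r → ρ r = 0) ∧
      (∀ r ∈ Ioo (0:ℝ) σ, 0 < ρ r) ∧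
      Integrable (fun z : ℝ => ρ |z| * z ^ 2) ∧
      (0 < ∫ z : ℝ, ρ |z| * z ^ 2) ∧
      (∀ δ ∈ Ioo (0:ℝ) (1/2), ∀ x ∈ Ioo (0:ℝ) 1, ∀ y ∈ Ioo (0:ℝ) 1,
        δ⁻¹ ^ 3 * ρ (|x - y| / δ) ≤ (wtk w δ x y + wtk w δ y x) / 2) := by
  by_cases hconst : ∃ p ∈ Ioo (0:ℝ) 1, ∃ a ∈ Ioo (0:ℝ) 1, p < a ∧ w a < w p
  · obtain ⟨p, hp, a, ha, hpa, hlt⟩ := hconst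
    set c : ℝ := (1 - a ^ 2) * (w p - w a) / 2 with hc
    have hc0 : 0 < c := by
      have : 0 < 1 - a ^ 2 := by nlinarith [ha.1, ha.2]
      have : 0 < w p - w a := by linarith
      positivity
    -- `σ ≤ 1/2` makes `1/2 ≤ s` imply `r ≤ s`.
    refine conclusion_of_bound (σ := min p (1 / 2)) (M := c)
      (ρ := (Ioo 0 (min p (1 / 2))).indicator fun _ => c)
      ⟨lt_min hp.1 (by norm_num), (min_le_left _ _).trans hp.2.le⟩
      (measurable_const.indicator measurableSet_Ioo)
      (fun r => indicator_le_self' (fun _ _ => hc0.le) r) (Or.inr ?_)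
      (fun r hr => indicator_of_notMem hr _)
      (fun r hr => by rw [indicator_of_mem hr]; exact hc0) ?_
    · intro r hr s hs hrs
      by_cases h : s ∈ Ioo 0 (min p (1 / 2))
      · have h' : r ∈ Ioo 0 (min p (1 / 2)) := ⟨hr.1, hrs.trans_lt h.2⟩
        rw [indicator_of_mem h, indicator_of_mem h']
      · rw [indicator_of_notMem h]
        exact indicator_nonneg (fun _ _ => hc0.le) r
    · intro r hr s hs hrs
      rw [indicator_of_mem hr]
      have hrp : r < p := hr.2.trans_le (min_le_left _ _)
      have hr2 : r < 1 / 2 := hr.2.trans_le (min_le_right _ _)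
      have hrs' : r ≤ s := hrs.elim id fun h => by linarith
      have hB := hw.bProfile_le hr.1 hrs' hs.2 (hrp.trans hpa).le ha.2.le
      have hwr := hw.anti hr.1 hrp.le
      nlinarith [mul_nonneg (by nlinarith [ha.1, ha.2] : (0:ℝ) ≤ 1 - a ^ 2) (sub_nonneg.2 hwr)]
  · push Not at hconst
    have hhalf : (1 / 2 : ℝ) ∈ Ioo (0:ℝ) 1 := by norm_num
    set k : ℝ := w (1 / 2) with hk
    have hk0 : 0 < k := hw.2.2.1 _ hhalf
    have heq : ∀ r ∈ Ioo (0:ℝ) 1, w r = k := by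
      intro r hr
      rcases lt_trichotomy r (1 / 2) with h | h | h
      · exact le_antisymm (hconst r hr _ hhalf h) (hw.anti hr.1 h.le)
      · rw [h]
      · exact le_antisymm (hw.anti hhalf.1 h.le) (hconst _ hhalf r hr h)
    have hle : ∀ s ∈ Ioc (0:ℝ) 1, w s ≤ k := by
      intro s hs
      rcases hs.2.lt_or_eq with h | h
      · exact (heq s ⟨hs.1, h⟩).le
      · exact hw.anti hhalf.1 (by rw [h]; norm_num)
    refine conclusion_of_bound (σ := 1) (M := k / 4)
      (ρ := (Ioo 0 1).indicator fun r => k * r / 4) (by norm_num)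
      (Measurable.indicator (by fun_prop) measurableSet_Ioo)
      (fun r => ?_) (Or.inl ?_)
      (fun r hr => indicator_of_notMem hr _)
      (fun r hr => by
        rw [indicator_of_mem hr]
        have := hr.1
        positivity) ?_
    · by_cases hr : r ∈ Ioo (0:ℝ) 1
      · rw [indicator_of_mem hr]
        nlinarith [hr.2]
      · rw [indicator_of_notMem hr]
        positivity
    · intro r hr s hs hrs
      rw [indicator_of_mem hr, indicator_of_mem hs]
      gcongr
    · intro r hr s hs hrs
      have hB := hw.bProfile_le_of_const hs.1 hs.2 (hle s hs) hk0.le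
      rw [indicator_of_mem hr, heq r hr]
      have : r / 2 ≤ s := by
        rcases hrs with h | h <;> linarith [hr.1, hr.2]
      nlinarith

end NonlocalDirichlet
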